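/- Let n ≥ 1. There exists a constant a₂ > 0 depending only on n such that for every smooth ℤⁿ-periodic real-valued eigenfunction ψ : ℝⁿ → ℝ of the Euclidean Laplacian with eigenvalue λ ≥ 1 and ψ not identically zero, every open ball of radius a₂ λ^{-1/2} in ℝⁿ contains a zero of ψ; consequently every nodal domain Ω of ψ satisfies in(Ω) ≤ a₂ λ^{-1/2}. -/

import Mathlib

open MeasureTheory Metric Filter Real

noncomputable section

/-- `ψ : ℝⁿ → ℝ` is `ℤⁿ`-periodic: `ψ (x + v) = ψ x` for every integer vector `v`. -/
def ZnPeriodic (n : ℕ) (ψ : EuclideanSpace ℝ (Fin n) → ℝ) : Prop :=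
  ∀ (x : EuclideanSpace ℝ (Fin n)) (v : Fin n → ℤ),
    ψ (show EuclideanSpace ℝ (Fin n) from WithLp.toLp 2 fun i => x i + (v i : ℝ)) = ψ x

/-- The Euclidean Laplacian `Δψ = ∑ᵢ ∂²ψ/∂xᵢ²`. -/
def lap (n : ℕ) (ψ : EuclideanSpace ℝ (Fin n) → ℝ) (x : EuclideanSpace ℝ (Fin n)) : ℝ :=
  ∑ i : Fin n,
    fderiv ℝ (fun y => fderiv ℝ ψ y (EuclideanSpace.single i (1:ℝ))) x
      (EuclideanSpace.single i (1:ℝ))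

/-- `Ω` is a nodal domain of `ψ`: a connected component of `{ψ ≠ 0}`. -/
def IsNodalDomain {n : ℕ} (ψ : EuclideanSpace ℝ (Fin n) → ℝ)
    (Ω : Set (EuclideanSpace ℝ (Fin n))) : Prop :=
  ∃ x, ψ x ≠ 0 ∧ Ω = connectedComponentIn {y | ψ y ≠ 0} x

/-- The inner radius of a set: the supremum of radii of open balls contained in it. -/
def innerRadius {n : ℕ} (Ω : Set (EuclideanSpace ℝ (Fin n))) : ℝ :=
  sSup {ρ : ℝ | 0 < ρ ∧ ∃ c, Metric.ball c ρ ⊆ Ω}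

/-- The fundamental domain `[0,1)ⁿ` of the torus `ℝⁿ/ℤⁿ`. -/
def fundDom (n : ℕ) : Set (EuclideanSpace ℝ (Fin n)) :=
  {x | ∀ i, x i ∈ Set.Ico (0:ℝ) 1}

/-- `S ⊆ ℕ` has full density: `#(S ∩ [1,N]) / N → 1`. -/
def FullDensity (S : Set ℕ) : Prop :=
  Filter.Tendsto (fun N => (Nat.card ↥(S ∩ Set.Icc 1 N) : ℝ) / N) Filter.atTop (nhds 1)

theorem second_deriv_nonpos {g g' : ℝ → ℝ} {d : ℝ} (hg : ∀ t, HasDerivAt g (g' t) t)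
    (hg' : HasDerivAt g' d 0) (hmax : IsLocalMax g 0) : d ≤ 0 := by
  by_contra hd
  push Not at hd
  have e1 : deriv g = g' := funext fun t => (hg t).deriv
  have e2 : deriv (deriv g) 0 = d := by rw [e1]; exact hg'.deriv
  have hmin : IsLocalMin g 0 :=
    isLocalMin_of_deriv_deriv_pos (by rw [e2]; exact hd) hmax.deriv_eq_zero
      (hg 0).continuousAt
  have hc : g =ᶠ[nhds 0] fun _ => g 0 := by
    filter_upwards [hmax, hmin] with t h1 h2
    exact le_antisymm h1 h2
  have h3 := hc.deriv.deriv_eq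
  rw [e2] at h3
  simp at h3
  exact hd.ne' h3

theorem pos_contra (n : ℕ) (ψ : EuclideanSpace ℝ (Fin n) → ℝ) (lam R : ℝ) (hlam : 0 < lam)
    (hR : 0 < R) (hlR : lam * R ^ 2 = ((n : ℝ) + 2) ^ 2)
    (hψ : ContDiff ℝ (⊤ : ℕ∞) ψ) (c : EuclideanSpace ℝ (Fin n))
    (heq : ∀ x, lap n ψ x = -lam * ψ x)
    (hpos : ∀ x ∈ Metric.closedBall c R, 0 < ψ x) : False := by
  have hcont : ContinuousOn (fun x => (R ^ 2 - ‖x - c‖ ^ 2) ^ 2 / ψ x) (Metric.closedBall c R) := by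
    apply ContinuousOn.div
    · fun_prop
    · exact hψ.continuous.continuousOn
    · exact fun x hx => (hpos x hx).ne'
  obtain ⟨x, hx, hmax⟩ := (isCompact_closedBall c R).exists_isMaxOn
    ⟨c, Metric.mem_closedBall_self hR.le⟩ hcont
  have hψx := hpos x hx
  set s := R ^ 2 - ‖x - c‖ ^ 2 with hs
  set k := s ^ 2 / ψ x with hk
  have hle : ∀ y ∈ Metric.closedBall c R, (R ^ 2 - ‖y - c‖ ^ 2) ^ 2 - k * ψ y ≤ 0 := by
    intro y hy
    have h := hmax hy
    simp only [Set.mem_ofPred_eq] at h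
    rw [div_le_iff₀ (hpos y hy)] at h
    linarith
  have hkx : k * ψ x = s ^ 2 := by rw [hk]; field_simp
  have hkpos : 0 < k := by
    have h := hle c (Metric.mem_closedBall_self hR.le)
    have h2 := hpos c (Metric.mem_closedBall_self hR.le)
    simp only [sub_self, norm_zero] at h
    have : 0 < (R ^ 2 - 0 ^ 2) ^ 2 := by simp; positivity
    by_contra hk0
    push Not at hk0
    nlinarith
  have hs0 : s ≠ 0 := by
    intro h0
    rw [h0] at hkx
    have := mul_pos hkpos hψx
    nlinarith
  have hxin : x ∈ Metric.ball c R := by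
    rw [Metric.mem_closedBall, dist_eq_norm] at hx
    rw [Metric.mem_ball, dist_eq_norm]
    refine lt_of_le_of_ne hx fun h => hs0 ?_
    rw [hs, h]; ring
  have hdir : ∀ i : Fin n, 8 * (x i - c i) ^ 2 - 4 * s -
      k * fderiv ℝ (fun y => fderiv ℝ ψ y (EuclideanSpace.single i (1:ℝ))) x
      (EuclideanSpace.single i (1:ℝ)) ≤ 0 := by
    intro i
    set e : EuclideanSpace ℝ (Fin n) := EuclideanSpace.single i (1:ℝ) with he
    have hline : ∀ t : ℝ, HasDerivAt (fun t : ℝ => x + t • e) e t := by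
      intro t
      simpa using ((hasDerivAt_id t).smul_const e).const_add x
    have hψd : Differentiable ℝ ψ := hψ.differentiable (by simp)
    have hψ1 : ∀ t : ℝ, HasDerivAt (fun t : ℝ => ψ (x + t • e)) (fderiv ℝ ψ (x + t • e) e) t :=
      fun t => (hψd (x + t • e)).hasFDerivAt.comp_hasDerivAt t (hline t)
    have hDd : Differentiable ℝ (fun y => fderiv ℝ ψ y e) := by
      have h1 : ContDiff ℝ 1 (fderiv ℝ ψ) := hψ.fderiv_right (WithTop.coe_le_coe.2 (le_top : (1 + 1 : ℕ∞) ≤ ⊤))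
      exact (h1.differentiable (by simp)).clm_apply (differentiable_const e)
    have hψ2 : HasDerivAt (fun t : ℝ => fderiv ℝ ψ (x + t • e) e)
        (fderiv ℝ (fun y => fderiv ℝ ψ y e) x e) 0 := by
      have h := (hDd (x + (0:ℝ) • e)).hasFDerivAt.comp_hasDerivAt (0:ℝ) (hline 0)
      simpa [Function.comp_def] using h
    set u := x i - c i with hu
    have hnorm : ∀ t : ℝ, R ^ 2 - ‖x + t • e - c‖ ^ 2 = s - 2 * t * u - t ^ 2 := by
      intro t
      have h1 : x + t • e - c = (x - c) + t • e := by abel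
      rw [h1, norm_add_sq_real, inner_smul_right, norm_smul]
      have h2 : inner ℝ (x - c) e = u := by
        simp [he, hu, EuclideanSpace.inner_single_right]
      have h3 : ‖e‖ = 1 := by simp [he]
      rw [h2, h3, hs, mul_one, Real.norm_eq_abs, sq_abs]
      ring
    have hp : ∀ t : ℝ, HasDerivAt (fun t : ℝ => s - 2 * t * u - t ^ 2) (-2 * u - 2 * t) t := by
      intro t
      have h := ((((hasDerivAt_id t).const_mul 2).mul_const u).const_sub s).sub
        ((hasDerivAt_id t).pow 2)
      refine h.congr_deriv ?_
      simp
    have hp' : HasDerivAt (fun t : ℝ => -2 * u - 2 * t) (-2) 0 := by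
      have h := ((hasDerivAt_id (0:ℝ)).const_mul 2).const_sub (-2 * u)
      refine h.congr_deriv ?_
      simp
    have hd := second_deriv_nonpos
      (g := fun t => (s - 2 * t * u - t ^ 2) ^ 2 - k * ψ (x + t • e))
      (fun t => ((hp t).pow 2).sub ((hψ1 t).const_mul k))
      ((((hp 0).pow 1).const_mul ((2:ℕ):ℝ) |>.mul hp').sub (hψ2.const_mul k)) ?_
    · simp at hd
      nlinarith
    · have hcl : ContinuousAt (fun t : ℝ => x + t • e) 0 := (hline 0).continuousAt
      have hmem : ∀ᶠ t : ℝ in nhds 0, x + t • e ∈ Metric.ball c R := by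
        apply hcl.eventually_mem
        simpa using Metric.isOpen_ball.mem_nhds hxin
      filter_upwards [hmem] with t ht
      have h := hle _ (Metric.ball_subset_closedBall ht)
      rw [hnorm] at h
      have h0 : (s - 2 * 0 * u - 0 ^ 2) ^ 2 - k * ψ (x + (0:ℝ) • e) = 0 := by
        simp [hkx]
      rw [h0]; exact h
  have hsum := Finset.sum_nonpos (fun i (_ : i ∈ Finset.univ) => hdir i)
  rw [Finset.sum_sub_distrib, Finset.sum_sub_distrib, ← Finset.mul_sum, ← Finset.mul_sum, ← Finset.mul_sum] at hsum
  have hl := heq x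
  unfold lap at hl
  rw [hl] at hsum
  have hn2 : ∑ i, (x i - c i) ^ 2 = R ^ 2 - s := by
    have := EuclideanSpace.norm_sq_eq (x - c)
    simp at this
    rw [hs, this]; ring
  rw [hn2] at hsum
  simp at hsum
  have h1 : 8 * (R ^ 2 - s) - 4 * (n * s) + lam * s ^ 2 ≤ 0 := by
    rw [← hkx]; linarith
  have h2 : lam * (8 * (R ^ 2 - s) - 4 * (n * s) + lam * s ^ 2) ≤ 0 :=
    mul_nonpos_of_nonneg_of_nonpos hlam.le h1
  have h3 : lam * (8 * (R ^ 2 - s) - 4 * (n * s) + lam * s ^ 2)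
      = (lam * s - 2 * (n + 2)) ^ 2 + 4 * ((n:ℝ) + 2) ^ 2 := by
    linear_combination 8 * hlR
  have h4 : 0 < ((n:ℝ) + 2) ^ 2 := by positivity
  nlinarith [sq_nonneg (lam * s - 2 * ((n:ℝ) + 2))]

theorem lap_neg' (n : ℕ) (ψ : EuclideanSpace ℝ (Fin n) → ℝ) (x : EuclideanSpace ℝ (Fin n)) :
    lap n (fun y => -ψ y) x = -lap n ψ x := by
  unfold lap
  rw [← Finset.sum_neg_distrib]
  refine Finset.sum_congr rfl fun i _ => ?_
  have : (fun y => fderiv ℝ (fun y => -ψ y) y (EuclideanSpace.single i (1:ℝ)))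
      = fun y => -(fderiv ℝ ψ y (EuclideanSpace.single i (1:ℝ))) := by
    funext y
    rw [fderiv_fun_neg]; rfl
  rw [this, fderiv_fun_neg]; rfl

theorem bruning_zeros_and_inner_radius_upper_bound
    (n : ℕ) (hn : 1 ≤ n) :
    ∃ a₂ : ℝ, 0 < a₂ ∧
      ∀ (ψ : EuclideanSpace ℝ (Fin n) → ℝ) (lam : ℝ),
        1 ≤ lam → ContDiff ℝ (⊤ : ℕ∞) ψ → ZnPeriodic n ψ →
        (∀ x, lap n ψ x = -lam * ψ x) → (∃ x, ψ x ≠ 0) →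
        (∀ c : EuclideanSpace ℝ (Fin n),
          ∃ z ∈ Metric.ball c (a₂ * lam ^ (-(1:ℝ)/2)), ψ z = 0) ∧
        (∀ Ω, IsNodalDomain ψ Ω → innerRadius Ω ≤ a₂ * lam ^ (-(1:ℝ)/2)) := by
  refine ⟨n + 3, by positivity, ?_⟩
  intro ψ lam hlam hψ _ heq _
  have hl0 : 0 < lam := by linarith
  have hq : 0 < lam ^ (-(1:ℝ)/2) := Real.rpow_pos_of_pos hl0 _
  have hq2 : lam * (lam ^ (-(1:ℝ)/2)) ^ 2 = 1 := by
    rw [← Real.rpow_natCast, ← Real.rpow_mul hl0.le]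
    norm_num [Real.rpow_neg_one]
    field_simp
  set q := lam ^ (-(1:ℝ)/2) with hqd
  have hR : 0 < ((n:ℝ) + 2) * q := by positivity
  have hlR : lam * (((n:ℝ) + 2) * q) ^ 2 = ((n : ℝ) + 2) ^ 2 := by
    linear_combination ((n : ℝ) + 2) ^ 2 * hq2
  have key : ∀ c : EuclideanSpace ℝ (Fin n), ∃ z ∈ Metric.ball c ((n + 3) * q), ψ z = 0 := by
    intro c
    by_contra hno
    push Not at hno
    have hsub : Metric.closedBall c (((n:ℝ) + 2) * q) ⊆ Metric.ball c ((n + 3) * q) :=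
      Metric.closedBall_subset_ball (by nlinarith)
    have hne : ∀ x ∈ Metric.closedBall c (((n:ℝ) + 2) * q), ψ x ≠ 0 := fun x hx => hno x (hsub hx)
    have hpre : IsPreconnected (Metric.closedBall c (((n:ℝ) + 2) * q)) :=
      (convex_closedBall c _).isPreconnected
    have hcB := Metric.mem_closedBall_self (x := c) hR.le
    rcases lt_or_gt_of_ne (hne c hcB) with h | h
    · refine pos_contra n (fun y => -ψ y) lam _ hl0 hR hlR hψ.neg c ?_ ?_
      · intro x
        rw [lap_neg', heq]; ring
      · intro x hx
        by_contra hx0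
        obtain ⟨z, hz, hz0⟩ := hpre.intermediate_value hcB hx hψ.continuous.continuousOn
          (show (0:ℝ) ∈ Set.Icc _ _ from ⟨h.le, by linarith⟩)
        exact hne z hz hz0
    · refine pos_contra n ψ lam _ hl0 hR hlR hψ c heq ?_
      intro x hx
      by_contra hx0
      obtain ⟨z, hz, hz0⟩ := hpre.intermediate_value hx hcB hψ.continuous.continuousOn
        (show (0:ℝ) ∈ Set.Icc _ _ from ⟨by linarith, h.le⟩)
      exact hne z hz hz0
  refine ⟨key, ?_⟩
  rintro Ω ⟨x, hx, rfl⟩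
  unfold innerRadius
  apply Real.sSup_le
  · rintro ρ ⟨hρ, c, hc⟩
    by_contra hlt
    push Not at hlt
    obtain ⟨z, hz, hz0⟩ := key c
    exact connectedComponentIn_subset _ _ (hc (Metric.ball_subset_ball hlt.le hz)) hz0
  · positivity
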